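/- arXiv:1812.09498 — 3 statements merged into one kernel-verified Lean document; each statement's English description precedes it below -/
import Mathlib

section
/- Let u ∈ C²([a,b]) be a solution of the straight BVP. Then u(x) > 0 for every x ∈ (a,b] and u'(a) > 0. -/
open Set Filter

noncomputable section

/-- Partial derivative of a two-argument function with respect to its first argument. -/
def pd1 (f : ℝ → ℝ → ℝ) (u x : ℝ) : ℝ := deriv (fun t => f t x) u

/-- Partial derivative of a two-argument function with respect to its second argument. -/
def pd2 (f : ℝ → ℝ → ℝ) (u x : ℝ) : ℝ := deriv (fun s => f u s) x

/-- The nonlinearity `𝒩(u,x) = N(u,x)·u`. -/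
def Ncal (N : ℝ → ℝ → ℝ) (u x : ℝ) : ℝ := N u x * u

/-- `u` is twice continuously differentiable on `s`, with first derivative `u'`
and second derivative `u''` (derivatives within `s`). -/
def IsC2On (u u' u'' : ℝ → ℝ) (s : Set ℝ) : Prop :=
  (∀ x ∈ s, HasDerivWithinAt u (u' x) s x) ∧
  (∀ x ∈ s, HasDerivWithinAt u' (u'' x) s x) ∧
  ContinuousOn u'' s

/-- The straight boundary value problem: `u ∈ C²([a,b])`, `u'' = 𝒩(u(x),x)` on `[a,b]`,
`u(a) = 0`, `u(b) = ub`. -/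
def IsStraightBVP (N : ℝ → ℝ → ℝ) (a b ub : ℝ) (u u' u'' : ℝ → ℝ) : Prop :=
  IsC2On u u' u'' (Icc a b) ∧
  (∀ x ∈ Icc a b, u'' x = Ncal N (u x) x) ∧
  u a = 0 ∧ u b = ub

/-!
Write the equation as `u'' = q u` with `q x = N (u x) x`. Since `𝒩(·, x)` is nondecreasing and
vanishes at `0`, `q x ≥ 0` wherever `u x ≠ 0`, so `u` is concave where it is negative; as `u` is
nonnegative at both endpoints, this forces `u ≥ 0` on `[a, b]`. If `u` and `u'` vanished
together at some point, then `u` would vanish to the right of it, up to `b`, by uniqueness for the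
Cauchy problem; hence `u'` is nonzero at every zero of `u`. An interior zero would be a minimum of
`u ≥ 0`, where `u' = 0`, and at a zero at the left endpoint `u' ≥ 0`.
-/

theorem nonneg_of_monotone_mul_self {R : Type*} [Ring R] [LinearOrder R] [IsStrictOrderedRing R]
    {f : R → R} (hf : Monotone fun t => f t * t) {t : R} (ht : t ≠ 0) : 0 ≤ f t := by
  rcases ht.lt_or_gt with hneg | hpos
  · have h : f t * t ≤ 0 := by simpa using hf hneg.le
    exact nonneg_of_mul_nonpos_left h hneg
  · have h : 0 ≤ f t * t := by simpa using hf hpos.le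
    exact nonneg_of_mul_nonneg_left h hpos

theorem monotone_Ncal {N : ℝ → ℝ → ℝ} {x : ℝ} (hN : Differentiable ℝ fun t => N t x)
    (hC1 : ∀ t, 0 ≤ pd1 (Ncal N) t x) : Monotone fun t => Ncal N t x :=
  monotone_of_deriv_nonneg (hN.mul differentiable_id) hC1

theorem exists_forall_Ioo_lt_of_le_endpoints {α β : Type*} [LinearOrder α] [TopologicalSpace α]
    [OrderClosedTopology α] [CompactIccSpace α] [LinearOrder β] [TopologicalSpace β]
    [ClosedIciTopology β] {f : α → β} {a b c : α} {m : β} (hf : ContinuousOn f (Icc a b))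
    (hc : c ∈ Icc a b) (ha : m ≤ f a) (hb : m ≤ f b) :
    ∃ p ∈ Icc a c, ∃ q ∈ Icc c b, m ≤ f p ∧ m ≤ f q ∧ ∀ x ∈ Ioo p q, f x < m := by
  have hcompact {s t : α} (h : Icc s t ⊆ Icc a b) : IsCompact (Icc s t ∩ f ⁻¹' Ici m) :=
    isCompact_Icc.of_isClosed_subset
      ((hf.mono h).preimage_isClosed_of_isClosed isClosed_Icc isClosed_Ici) inter_subset_left
  obtain ⟨p, ⟨hp, hfp⟩, hp_greatest⟩ :=
    (hcompact (Icc_subset_Icc_right hc.2)).exists_isGreatest ⟨a, left_mem_Icc.2 hc.1, ha⟩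
  obtain ⟨q, ⟨hq, hfq⟩, hq_least⟩ :=
    (hcompact (Icc_subset_Icc_left hc.1)).exists_isLeast ⟨b, right_mem_Icc.2 hc.2, hb⟩
  refine ⟨p, hp, q, hq, hfp, hfq, fun x hx => ?_⟩
  by_contra! hmx
  rcases le_total x c with hxc | hcx
  · exact hx.1.not_ge (hp_greatest ⟨⟨hp.1.trans hx.1.le, hxc⟩, hmx⟩)
  · exact hx.2.not_ge (hq_least ⟨⟨hcx, hx.2.le.trans hq.2⟩, hmx⟩)

theorem le_of_deriv2_nonpos_of_lt {f f' f'' : ℝ → ℝ} {a b m : ℝ} (hf : ContinuousOn f (Icc a b))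
    (hf' : ∀ x ∈ Ioo a b, HasDerivAt f (f' x) x) (hf'' : ∀ x ∈ Ioo a b, HasDerivAt f' (f'' x) x)
    (hconcave : ∀ x ∈ Ioo a b, f x < m → f'' x ≤ 0) (ha : m ≤ f a) (hb : m ≤ f b)
    {x : ℝ} (hx : x ∈ Icc a b) : m ≤ f x := by
  obtain ⟨p, hp, q, hq, hfp, hfq, hlt⟩ := exists_forall_Ioo_lt_of_le_endpoints hf hx ha hb
  have hpq : p ≤ q := hp.2.trans hq.1
  have hsub : Ioo p q ⊆ Ioo a b := Ioo_subset_Ioo hp.1 hq.2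
  have hpq_concave : ConcaveOn ℝ (Icc p q) f := by
    refine concaveOn_of_hasDerivWithinAt2_nonpos (f' := f') (f'' := f'') (convex_Icc p q)
      (hf.mono (Icc_subset_Icc hp.1 hq.2)) ?_ ?_ ?_ <;> rw [interior_Icc]
    · exact fun y hy => (hf' y (hsub hy)).hasDerivWithinAt
    · exact fun y hy => (hf'' y (hsub hy)).hasDerivWithinAt
    · exact fun y hy => hconcave y (hsub hy) (hlt y hy)
  calc m ≤ min (f p) (f q) := le_min hfp hfq
    _ ≤ f x := hpq_concave.min_le_of_mem_Icc (left_mem_Icc.2 hpq) (right_mem_Icc.2 hpq)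
      ⟨hp.2, hq.1⟩

theorem eq_zero_of_norm_deriv2_le_of_eq_zero_left {E : Type*} [NormedAddCommGroup E]
    [NormedSpace ℝ E] {u u' u'' : ℝ → E} {a b K : ℝ}
    (hu : ∀ x ∈ Icc a b, HasDerivWithinAt u (u' x) (Icc a b) x)
    (hu' : ∀ x ∈ Icc a b, HasDerivWithinAt u' (u'' x) (Icc a b) x)
    (hbound : ∀ x ∈ Ico a b, ‖u'' x‖ ≤ K * max ‖u x‖ ‖u' x‖) (ha : u a = 0) (ha' : u' a = 0)
    {x : ℝ} (hx : x ∈ Icc a b) : u x = 0 := by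
  have hpair : ∀ y ∈ Icc a b,
      HasDerivWithinAt (fun y => (u y, u' y)) (u' y, u'' y) (Icc a b) y :=
    fun y hy => (hu y hy).prodMk (hu' y hy)
  have hgrowth : ∀ y ∈ Ico a b, ‖(u' y, u'' y)‖ ≤ max 1 K * ‖(u y, u' y)‖ := fun y hy =>
    max_le
      (calc ‖u' y‖ ≤ 1 * max ‖u y‖ ‖u' y‖ := by rw [one_mul]; exact le_max_right _ _
        _ ≤ max 1 K * max ‖u y‖ ‖u' y‖ := by gcongr; exact le_max_left _ _)
      (calc ‖u'' y‖ ≤ K * max ‖u y‖ ‖u' y‖ := hbound y hy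
        _ ≤ max 1 K * max ‖u y‖ ‖u' y‖ := by gcongr; exact le_max_right _ _)
  have hzero : (u x, u' x) = 0 := eq_zero_of_abs_deriv_le_mul_abs_self_of_eq_zero_right
    (fun y hy => (hpair y hy).continuousWithinAt)
    (fun y hy => (hpair y (Ico_subset_Icc_self hy)).mono_of_mem_nhdsWithin
      (Icc_mem_nhdsGE_of_mem hy))
    (Prod.ext ha ha') hgrowth x hx
  exact congrArg Prod.fst hzero

theorem deriv_nonneg_of_isLocalMinOn_Icc_left {f : ℝ → ℝ} {f' a b : ℝ} (hab : a < b)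
    (hmin : IsLocalMinOn f (Icc a b) a) (hf : HasDerivWithinAt f f' (Icc a b) a) : 0 ≤ f' := by
  have hcone : (1 : ℝ) ∈ posTangentConeAt (Icc a b) a :=
    one_mem_posTangentConeAt_iff_frequently.2 (Eventually.frequently (Icc_mem_nhdsGT hab))
  simpa using hmin.hasFDerivWithinAt_nonneg hf.hasFDerivWithinAt hcone

section LinearEquation

variable {u u' q : ℝ → ℝ} {a b K : ℝ}

theorem nonneg_of_deriv2_eq_mul
    (hu : ∀ x ∈ Icc a b, HasDerivWithinAt u (u' x) (Icc a b) x)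
    (hu' : ∀ x ∈ Icc a b, HasDerivWithinAt u' (q x * u x) (Icc a b) x)
    (hq : ∀ x ∈ Icc a b, u x < 0 → 0 ≤ q x) (ha : 0 ≤ u a) (hb : 0 ≤ u b)
    {x : ℝ} (hx : x ∈ Icc a b) : 0 ≤ u x :=
  le_of_deriv2_nonpos_of_lt (fun y hy => (hu y hy).continuousWithinAt)
    (fun y hy => (hu y (Ioo_subset_Icc_self hy)).hasDerivAt (Icc_mem_nhds hy.1 hy.2))
    (fun y hy => (hu' y (Ioo_subset_Icc_self hy)).hasDerivAt (Icc_mem_nhds hy.1 hy.2))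
    (fun y hy huy =>
      mul_nonpos_of_nonneg_of_nonpos (hq y (Ioo_subset_Icc_self hy) huy) huy.le)
    ha hb hx

theorem deriv_ne_zero_of_deriv2_eq_mul
    (hu : ∀ x ∈ Icc a b, HasDerivWithinAt u (u' x) (Icc a b) x)
    (hu' : ∀ x ∈ Icc a b, HasDerivWithinAt u' (q x * u x) (Icc a b) x)
    (hK : ∀ x ∈ Icc a b, |q x| ≤ K) (hb : u b ≠ 0)
    {c : ℝ} (hc : c ∈ Icc a b) (huc : u c = 0) : u' c ≠ 0 := fun huc' => by
  have hsub : Icc c b ⊆ Icc a b := Icc_subset_Icc_left hc.1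
  have hbound : ∀ x ∈ Ico c b, ‖q x * u x‖ ≤ K * max ‖u x‖ ‖u' x‖ := fun x hx => by
    have hqx : |q x| ≤ K := hK x (hsub (Ico_subset_Icc_self hx))
    rw [norm_mul]
    exact mul_le_mul hqx (le_max_left _ _) (norm_nonneg _) ((abs_nonneg _).trans hqx)
  exact hb (eq_zero_of_norm_deriv2_le_of_eq_zero_left (fun x hx => (hu x (hsub hx)).mono hsub)
    (fun x hx => (hu' x (hsub hx)).mono hsub) hbound huc huc' (right_mem_Icc.2 hc.2))

theorem pos_of_deriv2_eq_mul
    (hu : ∀ x ∈ Icc a b, HasDerivWithinAt u (u' x) (Icc a b) x)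
    (hu' : ∀ x ∈ Icc a b, HasDerivWithinAt u' (q x * u x) (Icc a b) x)
    (hK : ∀ x ∈ Icc a b, |q x| ≤ K) (hq : ∀ x ∈ Icc a b, u x < 0 → 0 ≤ q x)
    (ha : 0 ≤ u a) (hb : 0 < u b) {x : ℝ} (hx : x ∈ Ioc a b) : 0 < u x := by
  have hnonneg : ∀ y ∈ Icc a b, 0 ≤ u y := fun y hy => nonneg_of_deriv2_eq_mul hu hu' hq ha hb.le hy
  have hx_mem : x ∈ Icc a b := Ioc_subset_Icc_self hx
  refine (hnonneg x hx_mem).lt_of_ne' fun hux => ?_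
  have hxb : x < b := hx.2.lt_of_ne (by rintro rfl; exact hb.ne' hux)
  have hnhds : Icc a b ∈ nhds x := Icc_mem_nhds hx.1 hxb
  have hmin : IsLocalMin u x := by
    filter_upwards [hnhds] with y hy
    exact hux ▸ hnonneg y hy
  exact deriv_ne_zero_of_deriv2_eq_mul hu hu' hK hb.ne' hx_mem hux
    (hmin.hasDerivAt_eq_zero ((hu x hx_mem).hasDerivAt hnhds))

theorem deriv_pos_left_of_deriv2_eq_mul (hab : a < b)
    (hu : ∀ x ∈ Icc a b, HasDerivWithinAt u (u' x) (Icc a b) x)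
    (hu' : ∀ x ∈ Icc a b, HasDerivWithinAt u' (q x * u x) (Icc a b) x)
    (hK : ∀ x ∈ Icc a b, |q x| ≤ K) (hq : ∀ x ∈ Icc a b, u x < 0 → 0 ≤ q x)
    (ha : u a = 0) (hb : 0 < u b) : 0 < u' a := by
  have ha_mem : a ∈ Icc a b := left_mem_Icc.2 hab.le
  have hmin : IsMinOn u (Icc a b) a := fun x hx =>
    ha.trans_le (nonneg_of_deriv2_eq_mul hu hu' hq ha.ge hb.le hx)
  exact (deriv_nonneg_of_isLocalMinOn_Icc_left hab hmin.localize (hu a ha_mem)).lt_of_ne'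
    (deriv_ne_zero_of_deriv2_eq_mul hu hu' hK hb.ne' ha_mem ha)

end LinearEquation

theorem straightBVP_pos_and_deriv_pos_at_left_general {a b ub : ℝ} (hab : a < b) (hub : 0 < ub)
    {N : ℝ → ℝ → ℝ} (hN : ContinuousOn (Function.uncurry N) (univ ×ˢ Icc a b))
    (hN_nonneg : ∀ t < 0, ∀ x ∈ Icc a b, 0 ≤ N t x)
    {u u' u'' : ℝ → ℝ} (hu : IsStraightBVP N a b ub u u' u'') :
    (∀ x ∈ Ioc a b, 0 < u x) ∧ 0 < u' a := by
  obtain ⟨⟨hderiv, hderiv2, -⟩, hode, ha, hb⟩ := hu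
  have hlinear : ∀ x ∈ Icc a b, HasDerivWithinAt u' (N (u x) x * u x) (Icc a b) x :=
    fun x hx => (hderiv2 x hx).congr_deriv (hode x hx)
  have hu_cont : ContinuousOn u (Icc a b) := fun x hx => (hderiv x hx).continuousWithinAt
  have hcoeff_cont : ContinuousOn (fun x => N (u x) x) (Icc a b) :=
    hN.comp (hu_cont.prodMk continuousOn_id) fun x hx => ⟨mem_univ _, hx⟩
  obtain ⟨K, hK⟩ := isCompact_Icc.exists_bound_of_continuousOn hcoeff_cont
  have hcoeff : ∀ x ∈ Icc a b, u x < 0 → 0 ≤ N (u x) x := fun x hx hux => hN_nonneg _ hux x hx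
  have hub_pos : 0 < u b := hb ▸ hub
  exact ⟨fun x hx => pos_of_deriv2_eq_mul hderiv hlinear hK hcoeff ha.ge hub_pos hx,
    deriv_pos_left_of_deriv2_eq_mul hab hderiv hlinear hK hcoeff ha hub_pos⟩

/-- a solution of the straight BVP satisfies `u(x) > 0` on `(a,b]`
and `u'(a) > 0`. -/
theorem straightBVP_pos_and_deriv_pos_at_left
    (a b ub : ℝ) (hab : a < b) (hub : 0 < ub)
    (N : ℝ → ℝ → ℝ) (hN : ContDiff ℝ 1 (Function.uncurry N))
    (hC1 : ∀ t : ℝ, ∀ x ∈ Icc a b, 0 ≤ pd1 (Ncal N) t x)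
    (hC2 : ∀ t : ℝ, 0 ≤ t → ∀ x ∈ Icc a b, 0 ≤ N t x)
    (u u' u'' : ℝ → ℝ)
    (hu : IsStraightBVP N a b ub u u' u'') :
    (∀ x ∈ Ioc a b, 0 < u x) ∧ 0 < u' a := by
  have hdiff (x : ℝ) : Differentiable ℝ fun t => N t x :=
    (hN.differentiable one_ne_zero).comp (differentiable_id.prodMk (differentiable_const x))
  exact straightBVP_pos_and_deriv_pos_at_left_general hab hub hN.continuous.continuousOn
    (fun _ ht x hx =>
      nonneg_of_monotone_mul_self (monotone_Ncal (hdiff x) fun t => hC1 t x hx) ht.ne) hu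
end
end

section
/- Fix a straight mesh on [a,c]. For every fixed x ∈ [a,c], the maps ν ↦ ũ_ν(x) and ν ↦ ũ_ν'(x) are continuous functions of ν on [0,∞). -/
open Set Filter

noncomputable section

/-- Hypothesis (H): `N`, `∂N/∂x`, `∂N/∂u`, `∂²N/∂x∂u`, `∂²N/∂u²` are all
nonnegative for `u ≥ 0` and `x ∈ [a,b]`. -/
def HypH (N : ℝ → ℝ → ℝ) (a b : ℝ) : Prop :=
  ∀ u : ℝ, 0 ≤ u → ∀ x ∈ Icc a b,
    0 ≤ N u x ∧ 0 ≤ pd2 N u x ∧ 0 ≤ pd1 N u x ∧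
    0 ≤ pd2 (pd1 N) u x ∧ 0 ≤ pd1 (pd1 N) u x

/-- A mesh: finitely many strictly increasing points `pt 0 < pt 1 < ⋯ < pt n`. -/
structure Mesh where
  n : ℕ
  pt : ℕ → ℝ
  npos : 0 < n
  mono : ∀ i < n, pt i < pt (i + 1)

/-- The coefficient `α_i(p,q,x)` of the straight discretized equation,
where `xi` is the mesh point `x_i`. -/
def alphaC (N : ℝ → ℝ → ℝ) (xi p q x : ℝ) : ℝ :=
  (pd1 N q xi * p + pd2 N q xi) * (x - xi) + N q xi

/-- The coefficient `β_i(p,q,v)` of the inverse discretized equation,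
where `ui` is the (shifted) mesh point `ū_i`. -/
def betaC (N : ℝ → ℝ → ℝ) (ui p q v : ℝ) : ℝ :=
  -(pd1 (Ncal N) ui q + pd2 (Ncal N) ui q * p) * (v - ui) - Ncal N ui q

/-- Shifted mesh knots `ū_i = max(u_i, s)`. -/
def ubar (m : Mesh) (s : ℝ) (i : ℕ) : ℝ := max (m.pt i) s

/-- A straight scheme solution on `[a,c]` with respect to the mesh `m`:
`ũ ∈ C¹([a,c])` and on each mesh subinterval `[x_i, x_{i+1}]` the second
derivative of `ũ` equals `α_i(ũ'(x_i), ũ(x_i), x)·ũ(x)`. -/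
def IsStraightSol (N : ℝ → ℝ → ℝ) (a c : ℝ) (m : Mesh) (u u' : ℝ → ℝ) : Prop :=
  (∀ x ∈ Icc a c, HasDerivWithinAt u (u' x) (Icc a c) x) ∧
  ContinuousOn u' (Icc a c) ∧
  ∀ i < m.n, ∀ x ∈ Icc (m.pt i) (m.pt (i + 1)),
    HasDerivWithinAt u'
      (alphaC N (m.pt i) (u' (m.pt i)) (u (m.pt i)) x * u x)
      (Icc (m.pt i) (m.pt (i + 1))) x

/-- An inverse scheme solution on `[s, ub]` with respect to the mesh `m` (shifted by `s`):
`x̃ ∈ C¹([s,ub])` and on each subinterval `[ū_i, ū_{i+1}]` the second derivative of `x̃`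
equals `β_i(x̃'(ū_i), x̃(ū_i), v)·(x̃'(v))³`. -/
def IsInvSol (N : ℝ → ℝ → ℝ) (ub : ℝ) (m : Mesh) (s : ℝ) (X X' : ℝ → ℝ) : Prop :=
  (∀ v ∈ Icc s ub, HasDerivWithinAt X (X' v) (Icc s ub) v) ∧
  ContinuousOn X' (Icc s ub) ∧
  ∀ i < m.n, ∀ v ∈ Icc (ubar m s i) (ubar m s (i + 1)),
    HasDerivWithinAt X'
      (betaC N (ubar m s i) (X' (ubar m s i)) (X (ubar m s i)) v * (X' v) ^ 3)
      (Icc (ubar m s i) (ubar m s (i + 1))) v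

/-- A scheme pair `(ũ, x̃)`. -/
def IsSchemePair (N : ℝ → ℝ → ℝ) (a b c ub : ℝ) (ms mi : Mesh)
    (u u' X X' : ℝ → ℝ) : Prop :=
  IsStraightSol N a c ms u u' ∧ u a = 0 ∧ 0 < u c ∧ u c < ub ∧ u' c ≠ 0 ∧
  IsInvSol N ub mi (u c) X X' ∧ X ub = b ∧ X (u c) = c ∧ X' (u c) = 1 / u' c

/-- A scheme pair additionally satisfying the sign inequalities
`0 < ũ < u_b`, `ũ' > 0`, `ũ'' ≥ 0` on `(a,c]`, and `c < x̃`, `x̃' > 0`, `x̃'' ≤ 0`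
on `(ũ(c), u_b]` (second derivatives taken on the mesh subintervals). -/
def GoodPair (N : ℝ → ℝ → ℝ) (a b c ub : ℝ) (ms mi : Mesh)
    (u u' X X' : ℝ → ℝ) : Prop :=
  IsSchemePair N a b c ub ms mi u u' X X' ∧
  (∀ x ∈ Ioc a c, 0 < u x ∧ u x < ub ∧ 0 < u' x) ∧
  (∀ i < ms.n, ∀ x ∈ Icc (ms.pt i) (ms.pt (i + 1)), x ∈ Ioc a c →
    0 ≤ alphaC N (ms.pt i) (u' (ms.pt i)) (u (ms.pt i)) x * u x) ∧
  (∀ v ∈ Ioc (u c) ub, c < X v ∧ 0 < X' v) ∧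
  (∀ i < mi.n, ∀ v ∈ Icc (ubar mi (u c) i) (ubar mi (u c) (i + 1)), v ∈ Ioc (u c) ub →
    betaC N (ubar mi (u c) i) (X' (ubar mi (u c) i)) (X (ubar mi (u c) i)) v * (X' v) ^ 3 ≤ 0)

/-- All steps of the straight mesh `ms` and of the (shifted) inverse mesh `mi`
are of size at most `h`. -/
def StepLe (ms mi : Mesh) (s h : ℝ) : Prop :=
  (∀ i < ms.n, ms.pt (i + 1) - ms.pt i ≤ h) ∧
  (∀ i < mi.n, ubar mi s (i + 1) - ubar mi s i ≤ h)

/-!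
On each mesh subinterval the pair `(ũ, ũ')` is a trajectory of the linear field
`(p, q) ↦ (q, α_i p)`, whose coefficient depends on the solution only through its values at the left
endpoint `x_i`. Grönwall's inequality shows that trajectories of such fields converge uniformly when
their initial values and their coefficients do, and since `N ∈ C¹`, the coefficient `α_i` depends
continuously on the endpoint data, uniformly in `x`. Convergence at `x_i` therefore spreads to
`[x_i, x_{i+1}]`, in particular to `x_{i+1}`, and so along the whole mesh. Since the convergence is
uniform in `x`, continuity is obtained jointly in the parameter and `x`.
-/

open Function Topology

section UniformConvergence

variable {ι X Y : Type*} [UniformSpace Y] {l : Filter ι} {F : ι → X → Y} {f : X → Y} {s t : Set X}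

theorem tendstoUniformlyOn_union (hs : TendstoUniformlyOn F f l s)
    (ht : TendstoUniformlyOn F f l t) : TendstoUniformlyOn F f l (s ∪ t) := fun V hV => by
  filter_upwards [hs V hV, ht V hV] with i hi hi' x hx
  exact hx.elim (hi x) (hi' x)

variable {P : Type*} [TopologicalSpace P] [TopologicalSpace X]

theorem tendstoUniformlyOn_of_continuous_uncurry {G : P → X → Y} (hG : Continuous (uncurry G))
    (hs : IsCompact s) {p : ι → P} {p₀ : P} (hp : Tendsto p l (𝓝 p₀)) :
    TendstoUniformlyOn (fun i => G (p i)) (G p₀) l s := fun V hV => by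
  obtain ⟨W, hW, hWV⟩ :=
    hs.mem_uniformity_of_prod (s := univ) hG.continuousOn (mem_univ p₀) (symm_le_uniformity hV)
  rw [nhdsWithin_univ] at hW
  exact (hp.eventually_mem hW).mono fun i hi => hWV (p i) hi

theorem continuousOn_uncurry_of_tendstoUniformlyOn {G : P → X → Y} {S : Set P}
    (hG : ∀ p ∈ S, ContinuousOn (G p) s)
    (hlim : ∀ p ∈ S, TendstoUniformlyOn G (G p) (𝓝[S] p) s) :
    ContinuousOn (uncurry G) (S ×ˢ s) := by
  rintro ⟨p, x⟩ ⟨hp, hx⟩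
  have hlim_prod : TendstoUniformlyOn (fun z : P × X => G z.1) (G p) (𝓝[S] p ×ˢ 𝓝[s] x) s :=
    fun V hV => tendsto_fst.eventually (hlim p hp V hV)
  rw [ContinuousWithinAt, nhdsWithin_prod_eq]
  exact hlim_prod.tendsto_comp (hG p hp x hx) tendsto_snd

end UniformConvergence

section Gronwall

theorem exists_pos_gronwallBound_lt (K x : ℝ) {η : ℝ} (hη : 0 < η) :
    ∃ r > 0, gronwallBound r K r x < η := by
  have hcont : Continuous fun r => gronwallBound r K r x := by
    by_cases hK : K = 0
    · simp only [hK, gronwallBound_K0]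
      fun_prop
    · simp only [gronwallBound_of_K_ne_0 hK]
      fun_prop
  have hlt : ∀ᶠ r in 𝓝 0, gronwallBound r K r x < η :=
    hcont.continuousAt.eventually_lt_const (by simpa only [gronwallBound_ε0_δ0] using hη)
  obtain ⟨r, hr, hr₀⟩ := ((hlt.filter_mono nhdsWithin_le_nhds).and self_mem_nhdsWithin).exists
    (f := 𝓝[>] (0 : ℝ))
  exact ⟨r, hr₀, hr⟩

variable {ι E : Type*} [NormedAddCommGroup E] [NormedSpace ℝ E] {l : Filter ι} {a b : ℝ}

/- Grönwall's inequality is applied to the field `v i`: the limit `g` is an approximate trajectory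
of it, with error `g' t - v i t (g t)`. -/
theorem tendstoUniformlyOn_of_trajectories_ODE {v : ι → ℝ → E → E} {K : NNReal}
    {f : ι → ℝ → E} {g g' : ℝ → E}
    (hv : ∀ᶠ i in l, ∀ t ∈ Ico a b, LipschitzWith K (v i t))
    (hf : ∀ᶠ i in l, ContinuousOn (f i) (Icc a b))
    (hf' : ∀ᶠ i in l, ∀ t ∈ Ico a b, HasDerivWithinAt (f i) (v i t (f i t)) (Ici t) t)
    (hg : ContinuousOn g (Icc a b))
    (hg' : ∀ t ∈ Ico a b, HasDerivWithinAt g (g' t) (Ici t) t)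
    (hvg : TendstoUniformlyOn (fun i t => v i t (g t)) g' l (Ico a b))
    (ha : Tendsto (fun i => f i a) l (𝓝 (g a))) :
    TendstoUniformlyOn f g l (Icc a b) := by
  rw [Metric.tendstoUniformlyOn_iff] at hvg ⊢
  intro η hη
  obtain ⟨r, hr, hrη⟩ := exists_pos_gronwallBound_lt K (b - a) hη
  filter_upwards [hv, hf, hf', hvg r hr, Metric.tendsto_nhds.1 ha r hr]
    with i hvi hfi hfi' hvgi hai t ht
  calc dist (g t) (f i t) ≤ gronwallBound r K (r + 0) (t - a) :=
        dist_le_of_approx_trajectories_ODE_of_mem (s := fun _ => univ)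
          (fun τ hτ => (hvi τ hτ).lipschitzOnWith) hg hg' (fun τ hτ => (hvgi τ hτ).le)
          (fun _ _ => mem_univ _) hfi hfi' (fun _ _ => (dist_self _).le) (fun _ _ => mem_univ _)
          (dist_comm (f i a) (g a) ▸ hai.le) t ht
    _ = gronwallBound r K r (t - a) := by rw [add_zero]
    _ ≤ gronwallBound r K r (b - a) :=
        gronwallBound_mono hr.le hr.le K.2 (sub_le_sub_right ht.2 a)
    _ < η := hrη

end Gronwall

section SecondOrderLinear

variable {E : Type*} [NormedAddCommGroup E] [NormedSpace ℝ E]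

/-- `u`, with first derivative `u'`, solves the linear second-order equation `u'' = α u` on `s`.
Derivatives are taken within `s`. -/
def IsSecondOrderLinearSol (α : ℝ → ℝ) (s : Set ℝ) (u u' : ℝ → E) : Prop :=
  (∀ x ∈ s, HasDerivWithinAt u (u' x) s x) ∧ ∀ x ∈ s, HasDerivWithinAt u' (α x • u x) s x

/-- The vector field on the phase space `E × E` of pairs `(u, u')` whose trajectories are the
solutions of `u'' = κ u`. -/
def phaseField (κ : ℝ) (z : E × E) : E × E := (z.2, κ • z.1)

theorem lipschitzWith_phaseField (κ : ℝ) :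
    LipschitzWith (max 1 ‖κ‖₊) (phaseField κ : E × E → E × E) := by
  have hsmul : LipschitzWith ‖κ‖₊ fun z : E × E => κ • z.1 :=
    ((lipschitzWith_smul κ).comp LipschitzWith.prod_fst).weaken (mul_one ‖κ‖₊).le
  exact LipschitzWith.prod_snd.prodMk hsmul

theorem dist_phaseField_le (κ κ' : ℝ) (z : E × E) :
    dist (phaseField κ z) (phaseField κ' z) ≤ dist κ κ' * ‖z‖ := by
  calc dist (phaseField κ z) (phaseField κ' z) = dist (κ • z.1) (κ' • z.1) := dist_prod_same_left
    _ ≤ dist κ κ' * ‖z.1‖ := by simpa only [dist_zero_right] using dist_pair_smul κ κ' z.1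
    _ ≤ dist κ κ' * ‖z‖ := by
        gcongr
        exact norm_fst_le z

namespace IsSecondOrderLinearSol

variable {α : ℝ → ℝ} {s : Set ℝ} {u u' : ℝ → E}

theorem hasDerivWithinAt_prodMk (hu : IsSecondOrderLinearSol α s u u') {x : ℝ} (hx : x ∈ s) :
    HasDerivWithinAt (fun x => (u x, u' x)) (phaseField (α x) (u x, u' x)) s x :=
  (hu.1 x hx).prodMk (hu.2 x hx)

theorem continuousOn_prodMk (hu : IsSecondOrderLinearSol α s u u') :
    ContinuousOn (fun x => (u x, u' x)) s :=
  HasDerivWithinAt.continuousOn fun _ hx => hu.hasDerivWithinAt_prodMk hx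

theorem hasDerivWithinAt_Ici {a b : ℝ} (hu : IsSecondOrderLinearSol α (Icc a b) u u') {x : ℝ}
    (hx : x ∈ Ico a b) :
    HasDerivWithinAt (fun x => (u x, u' x)) (phaseField (α x) (u x, u' x)) (Ici x) x :=
  (hu.hasDerivWithinAt_prodMk (Ico_subset_Icc_self hx)).mono_of_mem_nhdsWithin
    (Icc_mem_nhdsGE_of_mem hx)

end IsSecondOrderLinearSol

variable {ι X : Type*} {l : Filter ι}

theorem tendstoUniformlyOn_phaseField {α : ι → X → ℝ} {α₀ : X → ℝ} {s : Set X}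
    (hα : TendstoUniformlyOn α α₀ l s) {z : X → E × E} {M : ℝ} (hz : ∀ x ∈ s, ‖z x‖ ≤ M) :
    TendstoUniformlyOn (fun i x => phaseField (α i x) (z x)) (fun x => phaseField (α₀ x) (z x))
      l s := by
  rw [Metric.tendstoUniformlyOn_iff] at hα ⊢
  intro η hη
  have hM : 0 < |M| + 1 := by positivity
  filter_upwards [hα (η / (|M| + 1)) (div_pos hη hM)] with i hi x hx
  calc dist (phaseField (α₀ x) (z x)) (phaseField (α i x) (z x))
      ≤ dist (α₀ x) (α i x) * ‖z x‖ := dist_phaseField_le _ _ _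
    _ ≤ dist (α₀ x) (α i x) * (|M| + 1) := by
        gcongr
        linarith [hz x hx, le_abs_self M]
    _ < η := (lt_div_iff₀ hM).1 (hi x hx)

theorem eventually_lipschitzWith_phaseField {α : ι → X → ℝ} {α₀ : X → ℝ} {s : Set X}
    (hα : TendstoUniformlyOn α α₀ l s) {C : ℝ} (hC : ∀ x ∈ s, ‖α₀ x‖ ≤ C) :
    ∀ᶠ i in l, ∀ x ∈ s,
      LipschitzWith (max 1 (C + 1).toNNReal) (phaseField (α i x) : E × E → E × E) := by
  filter_upwards [Metric.tendstoUniformlyOn_iff.1 hα 1 one_pos] with i hi x hx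
  have hαi : ‖α i x‖ ≤ C + 1 :=
    calc ‖α i x‖ ≤ ‖α₀ x‖ + ‖α₀ x - α i x‖ := norm_le_norm_add_norm_sub _ _
      _ ≤ C + 1 := add_le_add (hC x hx) (dist_eq_norm (α₀ x) (α i x) ▸ (hi x hx).le)
  exact (lipschitzWith_phaseField (α i x)).weaken
    (max_le_max_left 1 (NNReal.le_toNNReal_of_coe_le hαi))

theorem tendstoUniformlyOn_of_isSecondOrderLinearSol {α : ι → ℝ → ℝ} {α₀ : ℝ → ℝ} {a b : ℝ}
    {u u' : ι → ℝ → E} {u₀ u₀' : ℝ → E} {C : ℝ} (hC : ∀ x ∈ Icc a b, ‖α₀ x‖ ≤ C)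
    (hα : TendstoUniformlyOn α α₀ l (Icc a b))
    (hu : ∀ᶠ i in l, IsSecondOrderLinearSol (α i) (Icc a b) (u i) (u' i))
    (hu₀ : IsSecondOrderLinearSol α₀ (Icc a b) u₀ u₀')
    (ha : Tendsto (fun i => (u i a, u' i a)) l (𝓝 (u₀ a, u₀' a))) :
    TendstoUniformlyOn (fun i x => (u i x, u' i x)) (fun x => (u₀ x, u₀' x)) l (Icc a b) := by
  obtain ⟨M, hM⟩ := isCompact_Icc.exists_bound_of_continuousOn hu₀.continuousOn_prodMk
  exact tendstoUniformlyOn_of_trajectories_ODE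
    ((eventually_lipschitzWith_phaseField hα hC).mono fun _ hi x hx =>
      hi x (Ico_subset_Icc_self hx))
    (hu.mono fun _ hi => hi.continuousOn_prodMk)
    (hu.mono fun _ hi _ hx => hi.hasDerivWithinAt_Ici hx)
    hu₀.continuousOn_prodMk (fun _ hx => hu₀.hasDerivWithinAt_Ici hx)
    ((tendstoUniformlyOn_phaseField hα hM).mono Ico_subset_Icc_self) ha

end SecondOrderLinear

section PartialDerivatives

variable {f : ℝ → ℝ → ℝ}

theorem pd1_eq_fderiv {u x : ℝ} (hf : DifferentiableAt ℝ (uncurry f) (u, x)) :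
    pd1 f u x = fderiv ℝ (uncurry f) (u, x) (1, 0) :=
  (hf.hasFDerivAt.comp_hasDerivAt (f := fun t => (t, x)) u
    ((hasDerivAt_id u).prodMk (hasDerivAt_const u x))).deriv

theorem pd2_eq_fderiv {u x : ℝ} (hf : DifferentiableAt ℝ (uncurry f) (u, x)) :
    pd2 f u x = fderiv ℝ (uncurry f) (u, x) (0, 1) :=
  (hf.hasFDerivAt.comp_hasDerivAt (f := fun t => (u, t)) x
    ((hasDerivAt_const x u).prodMk (hasDerivAt_id x))).deriv

theorem continuous_uncurry_pd1 (hf : ContDiff ℝ 1 (uncurry f)) : Continuous (uncurry (pd1 f)) :=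
  ((hf.continuous_fderiv one_ne_zero).clm_apply continuous_const).congr fun z =>
    (pd1_eq_fderiv (hf.differentiable one_ne_zero z)).symm

theorem continuous_uncurry_pd2 (hf : ContDiff ℝ 1 (uncurry f)) : Continuous (uncurry (pd2 f)) :=
  ((hf.continuous_fderiv one_ne_zero).clm_apply continuous_const).congr fun z =>
    (pd2_eq_fderiv (hf.differentiable one_ne_zero z)).symm

end PartialDerivatives

section StraightScheme

variable {N : ℝ → ℝ → ℝ} {m : Mesh}

theorem Mesh.monotoneOn_pt (m : Mesh) : MonotoneOn m.pt (Iic m.n) :=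
  (strictMonoOn_Iic_of_lt_succ m.mono).monotoneOn

/- The endpoint data are paired in phase-space order, `z = (ũ(x_i), ũ'(x_i))`, the reverse of the
argument order of `alphaC`. -/
theorem continuous_alphaC (hN : ContDiff ℝ 1 (uncurry N)) (xi : ℝ) :
    Continuous (uncurry fun z : ℝ × ℝ => alphaC N xi z.2 z.1) := by
  have hq : Continuous fun z : (ℝ × ℝ) × ℝ => (z.1.1, xi) := by fun_prop
  have hN_q := hN.continuous.comp hq
  have hpd1_q := (continuous_uncurry_pd1 hN).comp hq
  have hpd2_q := (continuous_uncurry_pd2 hN).comp hq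
  exact (((hpd1_q.mul (continuous_snd.comp continuous_fst)).add hpd2_q).mul
    (continuous_snd.sub continuous_const)).add hN_q

namespace IsStraightSol

variable {u u' : ℝ → ℝ}

theorem isSecondOrderLinearSol (hu : IsStraightSol N (m.pt 0) (m.pt m.n) m u u') {i : ℕ}
    (hi : i < m.n) :
    IsSecondOrderLinearSol (alphaC N (m.pt i) (u' (m.pt i)) (u (m.pt i)))
      (Icc (m.pt i) (m.pt (i + 1))) u u' := by
  have hsub : Icc (m.pt i) (m.pt (i + 1)) ⊆ Icc (m.pt 0) (m.pt m.n) :=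
    Icc_subset_Icc (m.monotoneOn_pt (Nat.zero_le _) hi.le (Nat.zero_le i))
      (m.monotoneOn_pt hi (mem_Iic.2 le_rfl) hi)
  exact ⟨fun x hx => (hu.1 x (hsub hx)).mono hsub, hu.2.2 i hi⟩

theorem continuousOn_prodMk {a c : ℝ} (hu : IsStraightSol N a c m u u') :
    ContinuousOn (fun x => (u x, u' x)) (Icc a c) :=
  (HasDerivWithinAt.continuousOn hu.1).prodMk hu.2.1

variable {ι : Type*} {l : Filter ι} {v v' : ι → ℝ → ℝ}

theorem tendstoUniformlyOn_subinterval (hN : ContDiff ℝ 1 (uncurry N))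
    (hv : ∀ᶠ j in l, IsStraightSol N (m.pt 0) (m.pt m.n) m (v j) (v' j))
    (hu : IsStraightSol N (m.pt 0) (m.pt m.n) m u u') {i : ℕ} (hi : i < m.n)
    (hlim : Tendsto (fun j => (v j (m.pt i), v' j (m.pt i))) l (𝓝 (u (m.pt i), u' (m.pt i)))) :
    TendstoUniformlyOn (fun j x => (v j x, v' j x)) (fun x => (u x, u' x)) l
      (Icc (m.pt i) (m.pt (i + 1))) := by
  have hα := continuous_alphaC hN (m.pt i)
  obtain ⟨C, hC⟩ := isCompact_Icc.exists_bound_of_continuousOn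
    (hα.uncurry_left (u (m.pt i), u' (m.pt i))).continuousOn
  exact tendstoUniformlyOn_of_isSecondOrderLinearSol hC
    (tendstoUniformlyOn_of_continuous_uncurry hα isCompact_Icc hlim)
    (hv.mono fun _ hj => hj.isSecondOrderLinearSol hi) (hu.isSecondOrderLinearSol hi) hlim

protected theorem tendstoUniformlyOn (hN : ContDiff ℝ 1 (uncurry N))
    (hv : ∀ᶠ j in l, IsStraightSol N (m.pt 0) (m.pt m.n) m (v j) (v' j))
    (hu : IsStraightSol N (m.pt 0) (m.pt m.n) m u u')
    (hlim : Tendsto (fun j => (v j (m.pt 0), v' j (m.pt 0))) l (𝓝 (u (m.pt 0), u' (m.pt 0)))) :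
    TendstoUniformlyOn (fun j x => (v j x, v' j x)) (fun x => (u x, u' x)) l
      (Icc (m.pt 0) (m.pt m.n)) := by
  suffices h : ∀ i ≤ m.n, TendstoUniformlyOn (fun j x => (v j x, v' j x)) (fun x => (u x, u' x)) l
      (Icc (m.pt 0) (m.pt i)) from h m.n le_rfl
  intro i
  induction i with
  | zero => simpa only [Icc_self, tendstoUniformlyOn_singleton_iff_tendsto] using fun _ => hlim
  | succ i ih =>
    intro hi
    have hle : m.pt 0 ≤ m.pt i :=
      m.monotoneOn_pt (Nat.zero_le _) (Nat.le_of_lt hi) (Nat.zero_le i)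
    have hprev := ih (Nat.le_of_lt hi)
    have hnext := tendstoUniformlyOn_subinterval hN hv hu hi
      (hprev.tendsto_at (right_mem_Icc.2 hle))
    rw [← Icc_union_Icc_eq_Icc hle (m.mono i hi).le]
    exact tendstoUniformlyOn_union hprev hnext

end IsStraightSol

end StraightScheme

theorem straight_scheme_continuous_in_slope_general {P : Type*} [TopologicalSpace P] {S : Set P}
    {N : ℝ → ℝ → ℝ} (hN : ContDiff ℝ 1 (uncurry N)) {m : Mesh} {U U' : P → ℝ → ℝ}
    (hU : ∀ p ∈ S, IsStraightSol N (m.pt 0) (m.pt m.n) m (U p) (U' p))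
    (h₀ : ContinuousOn (fun p => U p (m.pt 0)) S)
    (h₀' : ContinuousOn (fun p => U' p (m.pt 0)) S) :
    ContinuousOn (uncurry U) (S ×ˢ Icc (m.pt 0) (m.pt m.n)) ∧
      ContinuousOn (uncurry U') (S ×ˢ Icc (m.pt 0) (m.pt m.n)) := by
  have hpair : ContinuousOn (uncurry fun p x => (U p x, U' p x))
      (S ×ˢ Icc (m.pt 0) (m.pt m.n)) :=
    continuousOn_uncurry_of_tendstoUniformlyOn (fun p hp => (hU p hp).continuousOn_prodMk)
      fun p hp => IsStraightSol.tendstoUniformlyOn hN (eventually_mem_nhdsWithin.mono hU) (hU p hp)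
        ((h₀.prodMk h₀') p hp)
  exact ⟨hpair.fst, hpair.snd⟩

/-- the straight scheme solution `ũ_ν` and its derivative `ũ_ν'` depend
continuously on the initial slope `ν ∈ [0,∞)`, at every fixed point `x ∈ [a,c]`. -/
theorem straight_scheme_continuous_in_slope
    (a b c ub : ℝ) (hab : a < b) (hub : 0 < ub) (hc : c ∈ Ioo a b)
    (N : ℝ → ℝ → ℝ) (hN : ContDiff ℝ 2 (Function.uncurry N))
    (ms : Mesh) (hms0 : ms.pt 0 = a) (hmsn : ms.pt ms.n = c)
    (U U' : ℝ → ℝ → ℝ)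
    (hU : ∀ ν : ℝ, 0 ≤ ν →
      IsStraightSol N a c ms (U ν) (U' ν) ∧ U ν a = 0 ∧ U' ν a = ν) :
    ∀ x ∈ Icc a c,
      ContinuousOn (fun ν => U ν x) (Ici 0) ∧
      ContinuousOn (fun ν => U' ν x) (Ici 0) := by
  subst hms0 hmsn
  have h := straight_scheme_continuous_in_slope_general (hN.of_le one_le_two)
    (fun ν hν => (hU ν hν).1) (continuousOn_const.congr fun ν hν => (hU ν hν).2.1)
    (continuousOn_id.congr fun ν hν => (hU ν hν).2.2)
  exact fun x hx => ⟨h.1.uncurry_right x hx, h.2.uncurry_right x hx⟩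
end
end

section
/- Assume hypothesis (H) and fix a straight mesh on [a,c]. Then for every ν > 0 and every x ∈ [a,c] one has ũ_ν(x) ≥ ν·(x − a). -/
open Set Filter

noncomputable section

/-!
On a mesh interval `[l, r]` the scheme reads `u'' = k u`, and `k ≥ 0` as soon as `u` and `u'` are
nonnegative at `l`. As long as `u' > 0`, `u` increases, hence `u ≥ 0` and `u'' ≥ 0`, so `u'` stays
above `u' l > 0` and can never reach zero. The signs of `u` and `u'` are thus handed on from knot to
knot, `u'` never falls below its initial value, and the mean value inequality gives the bound.
-/

theorem forall_mem_Icc_lt_of_forall_Ico_lt {α β : Type*}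
    [LinearOrder α] [TopologicalSpace α] [CompactIccSpace α] [OrderClosedTopology α]
    [LinearOrder β] [TopologicalSpace β] [ClosedIicTopology β] {f : α → β} {l r : α} {m : β}
    (hf : ContinuousOn f (Icc l r))
    (hstep : ∀ t ∈ Icc l r, (∀ x ∈ Ico l t, m < f x) → m < f t) :
    ∀ x ∈ Icc l r, m < f x := by
  by_contra! hne
  have hcompact : IsCompact (Icc l r ∩ {x | f x ≤ m}) :=
    isCompact_Icc.of_isClosed_subset
      (hf.preimage_isClosed_of_isClosed isClosed_Icc isClosed_Iic) inter_subset_left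
  obtain ⟨t, ⟨ht, htm⟩, hleast⟩ := hcompact.exists_isLeast hne
  refine htm.not_gt (hstep t ht fun x hx => ?_)
  by_contra! hxm
  exact hx.2.not_ge (hleast ⟨⟨hx.1, hx.2.le.trans ht.2⟩, hxm⟩)

section DerivativeBounds

variable {l r : ℝ}

theorem add_mul_sub_le_of_le_hasDerivWithinAt {f f' : ℝ → ℝ} {C : ℝ}
    (hf : ∀ x ∈ Icc l r, HasDerivWithinAt f (f' x) (Icc l r) x)
    (hC : ∀ x ∈ Ioo l r, C ≤ f' x) {x : ℝ} (hx : x ∈ Icc l r) :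
    f l + C * (x - l) ≤ f x := by
  have hderiv : ∀ y ∈ interior (Icc l r), HasDerivAt f (f' y) y := fun y hy =>
    (hf y (interior_subset hy)).hasDerivAt (mem_interior_iff_mem_nhds.1 hy)
  have hmvt : C * (x - l) ≤ f x - f l :=
    (convex_Icc l r).mul_sub_le_image_sub_of_le_deriv
      (fun y hy => (hf y hy).continuousWithinAt)
      (fun y hy => (hderiv y hy).differentiableAt.differentiableWithinAt)
      (fun y hy => (hderiv y hy).deriv ▸ hC y (interior_Icc (a := l) ▸ hy))
      l (left_mem_Icc.2 (hx.1.trans hx.2)) x hx hx.1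
  linarith

theorem left_le_of_hasDerivWithinAt_nonneg {f f' : ℝ → ℝ}
    (hf : ∀ x ∈ Icc l r, HasDerivWithinAt f (f' x) (Icc l r) x)
    (hf' : ∀ x ∈ Ioo l r, 0 ≤ f' x) {x : ℝ} (hx : x ∈ Icc l r) : f l ≤ f x := by
  simpa only [zero_mul, add_zero] using add_mul_sub_le_of_le_hasDerivWithinAt hf hf' hx

variable {u u' k : ℝ → ℝ}

theorem deriv_left_le_deriv_right_of_deriv_pos (hlr : l ≤ r)
    (hu : ∀ x ∈ Icc l r, HasDerivWithinAt u (u' x) (Icc l r) x)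
    (hu' : ∀ x ∈ Icc l r, HasDerivWithinAt u' (k x * u x) (Icc l r) x)
    (hk : ∀ x ∈ Ioo l r, 0 ≤ k x) (hul : 0 ≤ u l) (hpos : ∀ x ∈ Ioo l r, 0 < u' x) :
    u' l ≤ u' r := by
  have hu_nonneg : ∀ x ∈ Icc l r, 0 ≤ u x := fun x hx =>
    hul.trans (left_le_of_hasDerivWithinAt_nonneg hu (fun y hy => (hpos y hy).le) hx)
  exact left_le_of_hasDerivWithinAt_nonneg hu'
    (fun x hx => mul_nonneg (hk x hx) (hu_nonneg x (Ioo_subset_Icc_self hx)))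
    (right_mem_Icc.2 hlr)

theorem left_le_and_deriv_left_le_of_deriv_eq_nonneg_mul
    (hu : ∀ x ∈ Icc l r, HasDerivWithinAt u (u' x) (Icc l r) x)
    (hu' : ∀ x ∈ Icc l r, HasDerivWithinAt u' (k x * u x) (Icc l r) x)
    (hk : ∀ x ∈ Ioo l r, 0 ≤ k x) (hul : 0 ≤ u l) (hul' : 0 < u' l) {x : ℝ}
    (hx : x ∈ Icc l r) : u l ≤ u x ∧ u' l ≤ u' x := by
  have hgrow : ∀ t ∈ Icc l r, (∀ y ∈ Ico l t, 0 < u' y) → u' l ≤ u' t := fun t ht hpos =>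
    have hsub : Icc l t ⊆ Icc l r := Icc_subset_Icc_right ht.2
    deriv_left_le_deriv_right_of_deriv_pos ht.1
      (fun y hy => (hu y (hsub hy)).mono hsub) (fun y hy => (hu' y (hsub hy)).mono hsub)
      (fun y hy => hk y (Ioo_subset_Ioo_right ht.2 hy)) hul
      (fun y hy => hpos y (Ioo_subset_Ico_self hy))
  have hpos : ∀ y ∈ Icc l r, 0 < u' y :=
    forall_mem_Icc_lt_of_forall_Ico_lt (fun y hy => (hu' y hy).continuousWithinAt)
      fun t ht h => hul'.trans_le (hgrow t ht h)
  exact ⟨left_le_of_hasDerivWithinAt_nonneg hu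
      (fun y hy => (hpos y (Ioo_subset_Icc_self hy)).le) hx,
    hgrow x hx fun y hy => hpos y ⟨hy.1, hy.2.le.trans hx.2⟩⟩

end DerivativeBounds

namespace Mesh

variable (m : Mesh)

theorem strictMonoOn_pt : StrictMonoOn m.pt (Iic m.n) :=
  strictMonoOn_of_lt_succ ordConnected_Iic fun i _ _ hi => m.mono i (Nat.lt_of_succ_le hi)

theorem pt_mem_Icc {i : ℕ} (hi : i ≤ m.n) : m.pt i ∈ Icc (m.pt 0) (m.pt m.n) :=
  ⟨m.strictMonoOn_pt.monotoneOn (Nat.zero_le _) hi (Nat.zero_le i),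
    m.strictMonoOn_pt.monotoneOn hi self_mem_Iic hi⟩

theorem Icc_pt_succ_subset {i : ℕ} (hi : i < m.n) :
    Icc (m.pt i) (m.pt (i + 1)) ⊆ Icc (m.pt 0) (m.pt m.n) :=
  Icc_subset_Icc (m.pt_mem_Icc hi.le).1 (m.pt_mem_Icc hi).2

theorem forall_mem_Icc_of_step {P : ℝ → Prop} (hzero : P (m.pt 0))
    (hstep : ∀ i < m.n, P (m.pt i) → ∀ x ∈ Icc (m.pt i) (m.pt (i + 1)), P x) :
    ∀ x ∈ Icc (m.pt 0) (m.pt m.n), P x := by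
  suffices h : ∀ i ≤ m.n, ∀ x ∈ Icc (m.pt 0) (m.pt i), P x from h m.n le_rfl
  intro i
  induction i with
  | zero =>
    rintro - x hx
    rwa [le_antisymm hx.2 hx.1]
  | succ i ih =>
    intro hi x hx
    rcases le_total x (m.pt i) with hxi | hxi
    · exact ih (Nat.le_of_succ_le hi) x ⟨hx.1, hxi⟩
    · have hPi : P (m.pt i) :=
        ih (Nat.le_of_succ_le hi) _ (right_mem_Icc.2 (m.pt_mem_Icc (Nat.le_of_succ_le hi)).1)
      exact hstep i hi hPi x ⟨hxi, hx.2⟩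

end Mesh

theorem alphaC_nonneg {N : ℝ → ℝ → ℝ} {xi p q x : ℝ} (hN : 0 ≤ N q xi)
    (hN₁ : 0 ≤ pd1 N q xi) (hN₂ : 0 ≤ pd2 N q xi) (hp : 0 ≤ p) (hx : xi ≤ x) :
    0 ≤ alphaC N xi p q x :=
  add_nonneg (mul_nonneg (add_nonneg (mul_nonneg hN₁ hp) hN₂) (sub_nonneg.2 hx)) hN

theorem HypH.alphaC_nonneg {N : ℝ → ℝ → ℝ} {a b xi p q x : ℝ} (hH : HypH N a b)
    (hxi : xi ∈ Icc a b) (hp : 0 ≤ p) (hq : 0 ≤ q) (hx : xi ≤ x) : 0 ≤ alphaC N xi p q x := by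
  obtain ⟨hN, hN₂, hN₁, -, -⟩ := hH q hq xi hxi
  exact _root_.alphaC_nonneg hN hN₁ hN₂ hp hx

theorem straight_scheme_lower_bound_general {m : Mesh} {α : ℕ → ℝ → ℝ → ℝ → ℝ} {u u' : ℝ → ℝ}
    (hα : ∀ i < m.n, ∀ p q, 0 ≤ p → 0 ≤ q →
      ∀ x ∈ Ioo (m.pt i) (m.pt (i + 1)), 0 ≤ α i p q x)
    (hu : ∀ x ∈ Icc (m.pt 0) (m.pt m.n), HasDerivWithinAt u (u' x) (Icc (m.pt 0) (m.pt m.n)) x)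
    (hu' : ∀ i < m.n, ∀ x ∈ Icc (m.pt i) (m.pt (i + 1)),
      HasDerivWithinAt u' (α i (u' (m.pt i)) (u (m.pt i)) x * u x)
        (Icc (m.pt i) (m.pt (i + 1))) x)
    (hu_zero : 0 ≤ u (m.pt 0)) (hu'_zero : 0 < u' (m.pt 0)) :
    ∀ x ∈ Icc (m.pt 0) (m.pt m.n), u (m.pt 0) + u' (m.pt 0) * (x - m.pt 0) ≤ u x := by
  have hsign : ∀ x ∈ Icc (m.pt 0) (m.pt m.n), 0 ≤ u x ∧ u' (m.pt 0) ≤ u' x := by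
    refine m.forall_mem_Icc_of_step ⟨hu_zero, le_rfl⟩ fun i hi ⟨hui, hui'⟩ x hx => ?_
    have hpos : 0 < u' (m.pt i) := hu'_zero.trans_le hui'
    have hsub := m.Icc_pt_succ_subset hi
    obtain ⟨hle, hle'⟩ := left_le_and_deriv_left_le_of_deriv_eq_nonneg_mul
      (fun y hy => (hu y (hsub hy)).mono hsub) (hu' i hi) (hα i hi _ _ hpos.le hui) hui hpos hx
    exact ⟨hui.trans hle, hui'.trans hle'⟩
  exact fun x hx => add_mul_sub_le_of_le_hasDerivWithinAt hu
    (fun y hy => (hsign y (Ioo_subset_Icc_self hy)).2) hx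

/-- under hypothesis (H), the straight scheme solution with initial slope
`ν > 0` satisfies `ũ_ν(x) ≥ ν·(x − a)` on `[a,c]`. -/
theorem straight_scheme_lower_bound
    (a b c ub : ℝ) (hab : a < b) (hub : 0 < ub) (hc : c ∈ Ioo a b)
    (N : ℝ → ℝ → ℝ) (hN : ContDiff ℝ 2 (Function.uncurry N))
    (hH : HypH N a b)
    (ms : Mesh) (hms0 : ms.pt 0 = a) (hmsn : ms.pt ms.n = c)
    (ν : ℝ) (hν : 0 < ν)
    (u u' : ℝ → ℝ)
    (hsol : IsStraightSol N a c ms u u') (ha : u a = 0) (hd : u' a = ν) :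
    ∀ x ∈ Icc a c, ν * (x - a) ≤ u x := by
  subst hms0 hmsn hd
  simpa only [ha, zero_add] using straight_scheme_lower_bound_general
    (α := fun i => alphaC N (ms.pt i))
    (fun i hi p q hp hq x hx =>
      hH.alphaC_nonneg (Icc_subset_Icc_right hc.2.le (ms.pt_mem_Icc hi.le)) hp hq hx.1.le)
    hsol.1 hsol.2.2 ha.ge hν
end
end
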